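/- arXiv:2107.09701 — 7 statements merged into one kernel-verified Lean document; each statement's English description precedes it below -/
import Mathlib

section
/- Let X be a separable Banach space, let Φ : X × Y → ℝ satisfy conditions (i), (ii) and (iii), and let μ0 be a Borel probability measure on X such that there exists α > 0 with ∫_X exp(α‖u‖_X²) dμ0(u) < ∞ and such that μ0 assigns positive mass to every open ball of X. Then for every y ∈ Y the normalization constant Z(y) = ∫_X exp(−Φ(u;y)) dμ0(u) satisfies 0 < Z(y) < ∞, and the measure μ^y on X with density dμ^y/dμ0(u) = exp(−Φ(u;y))/Z(y) with respect to μ0 is a well-defined Borel probability measure on X. -/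
open MeasureTheory

theorem stmt1 {X Y : Type*} [NormedAddCommGroup X] [NormedSpace ℝ X] [CompleteSpace X]
    [TopologicalSpace.SeparableSpace X] [MeasurableSpace X] [BorelSpace X]
    [NormedAddCommGroup Y] [NormedSpace ℝ Y] [CompleteSpace Y]
    (Φ : X → Y → ℝ)
    -- condition (i)
    (hi : ∀ ε r : ℝ, 0 < ε → 0 < r → ∃ M : ℝ, ∀ (u : X) (y : Y), ‖y‖ < r →
      M - ε * ‖u‖ ^ 2 ≤ Φ u y)
    -- condition (ii)
    (hii : ∀ r : ℝ, 0 < r → ∃ K : ℝ, 0 < K ∧ ∀ (u : X) (y : Y), ‖u‖ < r → ‖y‖ < r →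
      Φ u y ≤ K)
    -- condition (iii)
    (hiii : ∀ r : ℝ, 0 < r → ∃ L : ℝ, 0 < L ∧ ∀ (u u' : X) (y : Y),
      ‖u‖ < r → ‖u'‖ < r → ‖y‖ < r → |Φ u y - Φ u' y| ≤ L * ‖u - u'‖)
    (μ0 : Measure X) [IsProbabilityMeasure μ0]
    (α : ℝ) (hα : 0 < α)
    (hint : Integrable (fun u => Real.exp (α * ‖u‖ ^ 2)) μ0)
    (hball : ∀ (x : X) (r : ℝ), 0 < r → 0 < μ0 (Metric.ball x r))
    (y : Y) :
    0 < (∫⁻ u, ENNReal.ofReal (Real.exp (-Φ u y)) ∂μ0) ∧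
    (∫⁻ u, ENNReal.ofReal (Real.exp (-Φ u y)) ∂μ0) < ⊤ ∧
    IsProbabilityMeasure (μ0.withDensity fun u =>
      ENNReal.ofReal (Real.exp (-Φ u y)) /
        ∫⁻ u', ENNReal.ofReal (Real.exp (-Φ u' y)) ∂μ0) := by
  have hcont : Continuous fun u => Φ u y := by
    rw [continuous_iff_continuousAt]
    intro u0
    have hr : 0 < ‖u0‖ + ‖y‖ + 1 := by positivity
    obtain ⟨L, hL, h⟩ := hiii (‖u0‖ + ‖y‖ + 1) hr
    have hy := norm_nonneg y
    have hu := norm_nonneg u0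
    have hev : ∀ᶠ u in nhds u0, ‖u‖ < ‖u0‖ + ‖y‖ + 1 :=
      continuous_norm.continuousAt.eventually_lt continuousAt_const (by linarith)
    rw [ContinuousAt, tendsto_iff_dist_tendsto_zero]
    have hlim : Filter.Tendsto (fun u => L * ‖u - u0‖) (nhds u0) (nhds 0) := by
      have hc : Continuous fun u : X => L * ‖u - u0‖ := by fun_prop
      simpa using hc.tendsto u0
    refine squeeze_zero' (Filter.Eventually.of_forall fun _ => dist_nonneg) ?_ hlim
    filter_upwards [hev] with u hu'
    rw [Real.dist_eq]
    exact h u u0 y hu' (by linarith) (by linarith)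
  have hmeas : Measurable fun u => ENNReal.ofReal (Real.exp (-Φ u y)) :=
    (ENNReal.continuous_ofReal.comp (Real.continuous_exp.comp hcont.neg)).measurable
  have hpos : 0 < ∫⁻ u, ENNReal.ofReal (Real.exp (-Φ u y)) ∂μ0 := by
    rw [lintegral_pos_iff_support hmeas]
    have hs : Function.support (fun u => ENNReal.ofReal (Real.exp (-Φ u y))) = Set.univ := by
      ext u
      simp [Real.exp_pos]
    rw [hs, measure_univ]
    exact one_pos
  have hfin : (∫⁻ u, ENNReal.ofReal (Real.exp (-Φ u y)) ∂μ0) < ⊤ := by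
    have hy := norm_nonneg y
    obtain ⟨M, hM⟩ := hi α (‖y‖ + 1) hα (by linarith)
    refine lt_of_le_of_lt (lintegral_mono fun u => ENNReal.ofReal_le_ofReal ?_)
      (hint.const_mul (Real.exp (-M))).lintegral_lt_top
    rw [← Real.exp_add]
    exact Real.exp_le_exp.mpr (by linarith [hM u y (by linarith)])
  refine ⟨hpos, hfin, ⟨?_⟩⟩
  rw [withDensity_apply _ MeasurableSet.univ, Measure.restrict_univ]
  simp_rw [div_eq_mul_inv]
  rw [lintegral_mul_const _ hmeas]
  exact ENNReal.mul_inv_cancel hpos.ne' hfin.ne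
end

section
/- Let X be a separable Banach space and Y a Banach space, let Φ : X × Y → ℝ satisfy conditions (i), (ii) and (iv), with Φ(·;y) Borel measurable for each y ∈ Y, and let μ0 be a Borel probability measure on X such that there exists α > 0 with ∫_X exp(α‖u‖_X²) dμ0(u) < ∞ and such that μ0 assigns positive mass to every open ball of X. For each y ∈ Y let μ^y be the posterior measure with density exp(−Φ(u;y))/Z(y) with respect to μ0, where Z(y) = ∫_X exp(−Φ(u;y)) dμ0(u). Then the map y ↦ μ^y is locally Lipschitz in the 1-Wasserstein distance: for every r > 0 there exists C = C(r) > 0 such that for all y, y' ∈ Y with ‖y‖_Y, ‖y'‖_Y < r and every bounded continuous ψ : X → ℝ with Lipschitz constant at most 1, one has |∫_X ψ dμ^y − ∫_X ψ dμ^{y'}| ≤ C‖y − y'‖_Y; that is, W1(μ^y, μ^{y'}) ≤ C‖y − y'‖_Y. -/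
open MeasureTheory

/-- The posterior measure with density `exp(-Φ(u)) / Z` with respect to `μ0`,
where `Z = ∫ exp(-Φ(u)) dμ0(u)`. -/
noncomputable def posterior {X : Type*} [MeasurableSpace X] (μ0 : Measure X) (Φ : X → ℝ) :
    Measure X :=
  μ0.withDensity fun u =>
    ENNReal.ofReal (Real.exp (-Φ u)) / ∫⁻ u', ENNReal.ofReal (Real.exp (-Φ u')) ∂μ0

theorem core_bound {X : Type*} [MeasurableSpace X] (μ : Measure X) (f g φ G : X → ℝ)
    (A d z : ℝ) (hz : 0 < z) (hd : 0 ≤ d) (hA : 0 ≤ A) (hG : Integrable G μ)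
    (hG0 : ∀ u, 0 ≤ G u)
    (hf : Measurable f) (hg : Measurable g) (hφ : Measurable φ)
    (f0 : ∀ u, |f u| ≤ A * G u) (g0 : ∀ u, |g u| ≤ A * G u)
    (f1 : ∀ u, |φ u * f u| ≤ A * G u) (g1 : ∀ u, |φ u * g u| ≤ A * G u)
    (h0 : ∀ u, |f u - g u| ≤ A * G u * d) (h1 : ∀ u, |φ u * (f u - g u)| ≤ A * G u * d)
    (zf : z ≤ ∫ u, f u ∂μ) (zg : z ≤ ∫ u, g u ∂μ) :
    |(∫ u, φ u * f u ∂μ) / (∫ u, f u ∂μ) - (∫ u, φ u * g u ∂μ) / (∫ u, g u ∂μ)| ≤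
      (A * (∫ u, G u ∂μ) / z + (A * (∫ u, G u ∂μ)) ^ 2 / z ^ 2) * d := by
  have iA : Integrable (fun u => A * G u) μ := hG.const_mul A
  have iAd : Integrable (fun u => A * G u * d) μ := iA.mul_const d
  have i_f : Integrable f μ := iA.mono' hf.aestronglyMeasurable (.of_forall f0)
  have i_g : Integrable g μ := iA.mono' hg.aestronglyMeasurable (.of_forall g0)
  have i_f1 : Integrable (fun u => φ u * f u) μ :=
    iA.mono' (hφ.mul hf).aestronglyMeasurable (.of_forall f1)
  have i_g1 : Integrable (fun u => φ u * g u) μ :=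
    iA.mono' (hφ.mul hg).aestronglyMeasurable (.of_forall g1)
  have J : ∫ u, A * G u ∂μ = A * ∫ u, G u ∂μ := integral_const_mul _ _
  have Jd : ∫ u, A * G u * d ∂μ = A * (∫ u, G u ∂μ) * d := by
    rw [integral_mul_const, J]
  have b1 : |(∫ u, φ u * f u ∂μ) - ∫ u, φ u * g u ∂μ| ≤ A * (∫ u, G u ∂μ) * d := by
    rw [← integral_sub i_f1 i_g1, ← Jd, ← Real.norm_eq_abs]
    refine norm_integral_le_of_norm_le iAd (.of_forall fun u => ?_)
    simpa [mul_sub] using h1 u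
  have b2 : |(∫ u, f u ∂μ) - ∫ u, g u ∂μ| ≤ A * (∫ u, G u ∂μ) * d := by
    rw [← integral_sub i_f i_g, ← Jd, ← Real.norm_eq_abs]
    exact norm_integral_le_of_norm_le iAd (.of_forall h0)
  have b3 : |∫ u, φ u * g u ∂μ| ≤ A * (∫ u, G u ∂μ) := by
    rw [← J, ← Real.norm_eq_abs]
    exact norm_integral_le_of_norm_le iA (.of_forall g1)
  have hK : 0 ≤ A * (∫ u, G u ∂μ) := mul_nonneg hA (integral_nonneg hG0)
  generalize A * (∫ u, G u ∂μ) = K at *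
  generalize (∫ u, φ u * f u ∂μ) = a at *
  generalize (∫ u, φ u * g u ∂μ) = b at *
  generalize (∫ u, f u ∂μ) = p at *
  generalize (∫ u, g u ∂μ) = q at *
  have hp : 0 < p := hz.trans_le zf
  have hq : 0 < q := hz.trans_le zg
  have e : a / p - b / q = (a - b) / p - b * (p - q) / (p * q) := by
    field_simp; ring
  have t1 : |(a - b) / p| ≤ K * d / z := by
    rw [abs_div, abs_of_pos hp]
    gcongr
  have t2 : |b * (p - q) / (p * q)| ≤ K * (K * d) / (z * z) := by
    rw [abs_div, abs_mul, abs_of_pos (mul_pos hp hq)]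
    gcongr
  rw [e]
  calc _ ≤ |(a - b) / p| + |b * (p - q) / (p * q)| := abs_sub _ _
    _ ≤ K * d / z + K * (K * d) / (z * z) := add_le_add t1 t2
    _ = _ := by field_simp

theorem integral_posterior {X : Type*} [MeasurableSpace X] (μ : Measure X) (Φ ψ : X → ℝ)
    (c : ℝ) (hΦ : Measurable Φ) (hi : Integrable (fun u => Real.exp (-Φ u)) μ)
    (hi1 : Integrable (fun u => (ψ u - c) * Real.exp (-Φ u)) μ)
    (hpos : 0 < ∫ u, Real.exp (-Φ u) ∂μ) :
    ∫ u, ψ u ∂(posterior μ Φ) =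
      (∫ u, (ψ u - c) * Real.exp (-Φ u) ∂μ) / (∫ u, Real.exp (-Φ u) ∂μ) + c := by
  unfold posterior
  rw [← ofReal_integral_eq_lintegral_ofReal hi (.of_forall fun u => (Real.exp_pos _).le)]
  rw [integral_withDensity_eq_integral_toReal_smul]
  · have e : ∀ u, (ENNReal.ofReal (Real.exp (-Φ u)) /
        ENNReal.ofReal (∫ u, Real.exp (-Φ u) ∂μ)).toReal • ψ u =
        ((ψ u - c) * Real.exp (-Φ u) + c * Real.exp (-Φ u)) / (∫ u, Real.exp (-Φ u) ∂μ) := by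
      intro u
      rw [ENNReal.toReal_div, ENNReal.toReal_ofReal (Real.exp_pos _).le,
        ENNReal.toReal_ofReal hpos.le, smul_eq_mul]
      ring
    simp_rw [e]
    rw [integral_div, integral_add hi1 (hi.const_mul c), integral_const_mul]
    field_simp
  · fun_prop
  · refine .of_forall fun u => ENNReal.div_lt_top ENNReal.ofReal_ne_top ?_
    simpa using hpos

theorem exp_sub_bound (a b m : ℝ) (ha : m ≤ a) (hb : m ≤ b) :
    |Real.exp (-a) - Real.exp (-b)| ≤ Real.exp (-m) * |a - b| := by
  wlog h : a ≤ b generalizing a b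
  · rw [abs_sub_comm, abs_sub_comm a b]
    exact this b a hb ha (le_of_not_ge h)
  have h1 : Real.exp (-b) ≤ Real.exp (-a) := Real.exp_le_exp.2 (by linarith)
  rw [abs_of_nonneg (by linarith), abs_of_nonpos (by linarith)]
  have h2 : Real.exp (-b) = Real.exp (-a) * Real.exp (a - b) := by
    rw [← Real.exp_add]; congr 1; ring
  have h3 := Real.add_one_le_exp (a - b)
  have h4 : Real.exp (-a) ≤ Real.exp (-m) := Real.exp_le_exp.2 (by linarith)
  have h5 := Real.exp_pos (-a)
  nlinarith

theorem stmt3 {X Y : Type*} [NormedAddCommGroup X] [NormedSpace ℝ X] [CompleteSpace X]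
    [TopologicalSpace.SeparableSpace X] [MeasurableSpace X] [BorelSpace X]
    [NormedAddCommGroup Y] [NormedSpace ℝ Y] [CompleteSpace Y]
    (Φ : X → Y → ℝ)
    (hmeas : ∀ y : Y, Measurable fun u => Φ u y)
    -- condition (i)
    (hi : ∀ ε r : ℝ, 0 < ε → 0 < r → ∃ M : ℝ, ∀ (u : X) (y : Y), ‖y‖ < r →
      M - ε * ‖u‖ ^ 2 ≤ Φ u y)
    -- condition (ii)
    (hii : ∀ r : ℝ, 0 < r → ∃ K : ℝ, 0 < K ∧ ∀ (u : X) (y : Y), ‖u‖ < r → ‖y‖ < r →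
      Φ u y ≤ K)
    -- condition (iv)
    (hiv : ∀ ε r : ℝ, 0 < ε → 0 < r → ∃ C : ℝ, ∀ (u : X) (y y' : Y), ‖y‖ < r → ‖y'‖ < r →
      |Φ u y - Φ u y'| ≤ Real.exp (ε * ‖u‖ ^ 2 + C) * ‖y - y'‖)
    (μ0 : Measure X) [IsProbabilityMeasure μ0]
    (α : ℝ) (hα : 0 < α)
    (hint : Integrable (fun u => Real.exp (α * ‖u‖ ^ 2)) μ0)
    (hball : ∀ (x : X) (r : ℝ), 0 < r → 0 < μ0 (Metric.ball x r)) :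
    ∀ r : ℝ, 0 < r → ∃ C : ℝ, 0 < C ∧ ∀ y y' : Y, ‖y‖ < r → ‖y'‖ < r →
      ∀ ψ : X → ℝ, Continuous ψ → (∃ B : ℝ, ∀ x, |ψ x| ≤ B) → LipschitzWith 1 ψ →
        |(∫ u, ψ u ∂(posterior μ0 fun u => Φ u y)) -
            ∫ u, ψ u ∂(posterior μ0 fun u => Φ u y')| ≤ C * ‖y - y'‖ := by
  intro r hr
  obtain ⟨M, hM⟩ := hi (α / 4) r (by positivity) hr
  obtain ⟨K, hK0, hK⟩ := hii r hr
  obtain ⟨C, hC⟩ := hiv (α / 4) r (by positivity) hr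
  set G : X → ℝ := fun u => Real.exp (α * ‖u‖ ^ 2) with hGdef
  set E : X → ℝ := fun u => Real.exp (α / 4 * ‖u‖ ^ 2) with hEdef
  have hE1 : ∀ u, 1 ≤ E u := fun u => Real.one_le_exp (by positivity)
  have hGE : ∀ u, G u = E u ^ 4 := by
    intro u
    simp only [hGdef, hEdef, ← Real.exp_nat_mul]
    congr 1; push_cast; ring
  set c : ℝ := 1 + 4 / α with hc
  have hc1 : 1 ≤ c := by rw [hc]; have : 0 < 4 / α := by positivity
                         linarith
  have hnE : ∀ u : X, ‖u‖ ≤ c * E u := by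
    intro u
    have h1 := Real.add_one_le_exp (α / 4 * ‖u‖ ^ 2)
    have h2 : c * (α / 4 * ‖u‖ ^ 2 + 1) = α / 4 * ‖u‖ ^ 2 + 1 + ‖u‖ ^ 2 + 4 / α := by
      rw [hc]; field_simp; ring
    have h3 : c * (α / 4 * ‖u‖ ^ 2 + 1) ≤ c * E u := by gcongr
    have h4 : 0 < 4 / α := by positivity
    have h5 : 0 ≤ α / 4 * ‖u‖ ^ 2 := by positivity
    nlinarith [sq_nonneg (‖u‖ - 1)]
  set P : ℝ := Real.exp (-M) with hP
  set Q : ℝ := Real.exp C with hQ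
  have hP0 : 0 < P := Real.exp_pos _
  have hQ0 : 0 < Q := Real.exp_pos _
  have hf : ∀ y : Y, ‖y‖ < r → ∀ u, Real.exp (-Φ u y) ≤ P * E u := by
    intro y hy u
    rw [hP, hEdef, ← Real.exp_add]
    exact Real.exp_le_exp.2 (by linarith [hM u y hy])
  have hdf : ∀ y y' : Y, ‖y‖ < r → ‖y'‖ < r → ∀ u,
      |Real.exp (-Φ u y) - Real.exp (-Φ u y')| ≤ P * E u * (E u * Q * ‖y - y'‖) := by
    intro y y' hy hy' u
    refine (exp_sub_bound _ _ _ (hM u y hy) (hM u y' hy')).trans ?_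
    have e1 : Real.exp (-(M - α / 4 * ‖u‖ ^ 2)) = P * E u := by
      rw [hP, hEdef, ← Real.exp_add]; congr 1; ring
    have e2 := hC u y y' hy hy'
    rw [Real.exp_add] at e2
    rw [e1]
    have := hE1 u
    gcongr
  set z : ℝ := Real.exp (-K) * μ0.real (Metric.ball 0 r) with hz
  have hz0 : 0 < z := by
    refine mul_pos (Real.exp_pos _) ?_
    exact ENNReal.toReal_pos (hball 0 r hr).ne' (measure_ne_top _ _)
  set A : ℝ := P * c * (1 + Q) with hA
  have hA0 : 0 < A := by positivity
  have hG0 : ∀ u, 0 ≤ G u := fun u => (Real.exp_pos _).le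
  have hEG : ∀ u, ∀ k ≤ 4, E u ^ k ≤ G u := by
    intro u k hk
    rw [hGE]
    exact pow_le_pow_right₀ (hE1 u) hk
  have hb1 : ∀ u, P * E u ≤ A * G u := by
    intro u
    have := hEG u 1 (by norm_num)
    rw [pow_one] at this
    refine mul_le_mul ?_ this (by linarith [hE1 u]) hA0.le
    rw [hA, mul_assoc]
    exact le_mul_of_one_le_right hP0.le (by nlinarith)
  have hb2 : ∀ u, c * E u * (P * E u) ≤ A * G u := by
    intro u
    have := hEG u 2 (by norm_num)
    calc c * E u * (P * E u) = P * c * E u ^ 2 := by ring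
      _ ≤ _ := by
        refine mul_le_mul ?_ this (by positivity) hA0.le
        exact le_mul_of_one_le_right (by positivity) (by linarith)
  have hb3 : ∀ u, P * E u * (E u * Q) ≤ A * G u := by
    intro u
    have := hEG u 2 (by norm_num)
    calc P * E u * (E u * Q) = P * 1 * Q * E u ^ 2 := by ring
      _ ≤ _ := by
        refine mul_le_mul ?_ this (by positivity) hA0.le
        rw [hA]; gcongr; linarith
  have hb4 : ∀ u, c * E u * (P * E u * (E u * Q)) ≤ A * G u := by
    intro u
    have := hEG u 3 (by norm_num)
    calc c * E u * (P * E u * (E u * Q)) = P * c * Q * E u ^ 3 := by ring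
      _ ≤ _ := by
        have := hE1 u
        refine mul_le_mul ?_ (hEG u 3 (by norm_num)) (by positivity) hA0.le
        rw [hA]; gcongr; linarith
  have hfi : ∀ y : Y, Measurable fun u => Real.exp (-Φ u y) := fun y =>
    Real.measurable_exp.comp (hmeas y).neg
  have hfa : ∀ y : Y, ‖y‖ < r → ∀ u, |Real.exp (-Φ u y)| ≤ A * G u := by
    intro y hy u
    rw [abs_of_pos (Real.exp_pos _)]
    exact (hf y hy u).trans (hb1 u)
  have iA : Integrable (fun u => A * G u) μ0 := hint.const_mul A
  have hInt : ∀ y : Y, ‖y‖ < r → Integrable (fun u => Real.exp (-Φ u y)) μ0 := fun y hy =>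
    iA.mono' (hfi y).aestronglyMeasurable (.of_forall (hfa y hy))
  have hzl : ∀ y : Y, ‖y‖ < r → z ≤ ∫ u, Real.exp (-Φ u y) ∂μ0 := by
    intro y hy
    have h1 : ∫ u in Metric.ball (0 : X) r, Real.exp (-K) ∂μ0 = z := by
      rw [setIntegral_const, smul_eq_mul, mul_comm]
    rw [← h1]
    refine le_trans (setIntegral_mono_on (by simp) (hInt y hy).integrableOn
      Metric.isOpen_ball.measurableSet fun u hu => ?_)
      (setIntegral_le_integral (hInt y hy) (.of_forall fun u => (Real.exp_pos _).le))
    exact Real.exp_le_exp.2 (by linarith [hK u y (by simpa using hu) hy])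
  have hJ : 0 ≤ ∫ u, G u ∂μ0 := integral_nonneg hG0
  refine ⟨A * (∫ u, G u ∂μ0) / z + (A * (∫ u, G u ∂μ0)) ^ 2 / z ^ 2 + 1, by positivity, ?_⟩
  intro y y' hy hy' ψ hψ _ hL
  have hφ : ∀ u, |ψ u - ψ 0| ≤ c * E u := by
    intro u
    have := hL.dist_le_mul u 0
    rw [Real.dist_eq, dist_zero_right] at this
    simp only [NNReal.coe_one, one_mul] at this
    exact this.trans (hnE u)
  have hφm : Measurable fun u => ψ u - ψ 0 := (hψ.sub continuous_const).measurable
  have hE0 : ∀ u, 0 ≤ E u := fun u => zero_le_one.trans (hE1 u)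
  have hf1 : ∀ y : Y, ‖y‖ < r → ∀ u, |(ψ u - ψ 0) * Real.exp (-Φ u y)| ≤ A * G u := by
    intro y hy u
    rw [abs_mul, abs_of_pos (Real.exp_pos _)]
    refine le_trans ?_ (hb2 u)
    exact mul_le_mul (hφ u) (hf y hy u) (Real.exp_pos _).le
      (mul_nonneg (by linarith) (hE0 u))
  have hInt1 : ∀ y : Y, ‖y‖ < r → Integrable (fun u => (ψ u - ψ 0) * Real.exp (-Φ u y)) μ0 :=
    fun y hy => iA.mono' (hφm.mul (hfi y)).aestronglyMeasurable (.of_forall (hf1 y hy))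
  rw [integral_posterior μ0 _ ψ (ψ 0) (hmeas y) (hInt y hy) (hInt1 y hy)
      (hz0.trans_le (hzl y hy)),
    integral_posterior μ0 _ ψ (ψ 0) (hmeas y') (hInt y' hy') (hInt1 y' hy')
      (hz0.trans_le (hzl y' hy')), add_sub_add_right_eq_sub]
  refine (core_bound μ0 _ _ (fun u => ψ u - ψ 0) G A ‖y - y'‖ z hz0 (norm_nonneg _) hA0.le
    hint hG0 (hfi y) (hfi y') hφm (hfa y hy) (hfa y' hy') (hf1 y hy) (hf1 y' hy') ?_ ?_
    (hzl y hy) (hzl y' hy')).trans ?_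
  · intro u
    refine (hdf y y' hy hy' u).trans ?_
    rw [← mul_assoc]
    exact mul_le_mul_of_nonneg_right (hb3 u) (norm_nonneg _)
  · intro u
    rw [abs_mul]
    refine (mul_le_mul (hφ u) (hdf y y' hy hy' u) (abs_nonneg _)
      (mul_nonneg (by linarith) (hE0 u))).trans ?_
    rw [← mul_assoc (P * E u), ← mul_assoc (c * E u)]
    exact mul_le_mul_of_nonneg_right (hb4 u) (norm_nonneg _)
  · exact mul_le_mul_of_nonneg_right (by linarith) (norm_nonneg _)
end

section
/- Let X be a separable Banach space and let μ0 be a Borel probability measure on X such that there exists α > 0 with ∫_X exp(α‖u‖_X²) dμ0(u) < ∞ and such that μ0 assigns positive mass to every open ball of X. Let Φ : X → ℝ and, for each N ∈ ℕ, Φ^N : X → ℝ be Borel measurable and satisfy, with constants uniform in N: (i') for every ε > 0 there is M = M(ε) ∈ ℝ with Φ(u) ≥ M − ε‖u‖_X² and Φ^N(u) ≥ M − ε‖u‖_X² for all u ∈ X; (ii') for every r > 0 there is K = K(r) > 0 with Φ(u) ≤ K and Φ^N(u) ≤ K whenever ‖u‖_X < r. Assume moreover that for every ε > 0 there is K' =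 K'(ε) > 0 such that |Φ(u) − Φ^N(u)| ≤ K' exp(ε‖u‖_X²) Ψ(N) for all u ∈ X and all N, where Ψ(N) → 0 as N → ∞. Let μ and μ^N be the probability measures with densities exp(−Φ(u))/Z and exp(−Φ^N(u))/Z^N with respect to μ0, where Z = ∫_X exp(−Φ(u)) dμ0(u) and Z^N = ∫_X exp(−Φ^N(u)) dμ0(u). Then there is a constant C, independent of N, such that for every bounded continuous ψ : X → ℝ with Lipschitz constant at most 1, |∫_X ψ dμ − ∫_X ψ dμ^N| ≤ C Ψ(N); that is, W1(μ, μ^N) ≤ C Ψ(N). -/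
open MeasureTheory Filter

lemma posterior_integral {X : Type*} [MeasurableSpace X] (μ0 : Measure X) (Φ : X → ℝ)
    (hm : Measurable Φ) (hI : Integrable (fun u => Real.exp (-Φ u)) μ0)
    (hZ : 0 < ∫ u, Real.exp (-Φ u) ∂μ0) (ψ : X → ℝ)
    (hψ : Integrable (fun u => ψ u * Real.exp (-Φ u)) μ0) (c : ℝ) :
    ∫ u, ψ u ∂(posterior μ0 Φ) =
      (∫ u, (ψ u - c) * Real.exp (-Φ u) ∂μ0) / (∫ u, Real.exp (-Φ u) ∂μ0) + c := by
  have hl : ∫⁻ u', ENNReal.ofReal (Real.exp (-Φ u')) ∂μ0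
      = ENNReal.ofReal (∫ u, Real.exp (-Φ u) ∂μ0) :=
    (ofReal_integral_eq_lintegral_ofReal hI
      (Filter.Eventually.of_forall fun u => (Real.exp_pos _).le)).symm
  have h1 : ∫ u, ψ u ∂(posterior μ0 Φ) =
      (∫ u, ψ u * Real.exp (-Φ u) ∂μ0) / (∫ u, Real.exp (-Φ u) ∂μ0) := by
    unfold posterior
    rw [hl]
    rw [integral_withDensity_eq_integral_toReal_smul]
    · rw [← integral_div]
      congr 1
      ext u
      rw [ENNReal.toReal_div, ENNReal.toReal_ofReal (Real.exp_pos _).le,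
        ENNReal.toReal_ofReal hZ.le, smul_eq_mul]
      ring
    · exact (hm.neg.exp.ennreal_ofReal).div_const _
    · refine Filter.Eventually.of_forall fun u => ?_
      exact ENNReal.div_lt_top ENNReal.ofReal_ne_top (by simpa using hZ)
  have h2 : ∫ u, (ψ u - c) * Real.exp (-Φ u) ∂μ0 =
      ∫ u, ψ u * Real.exp (-Φ u) ∂μ0 - c * ∫ u, Real.exp (-Φ u) ∂μ0 := by
    rw [← integral_const_mul, ← integral_sub hψ (hI.const_mul c)]
    congr 1
    ext u
    ring
  rw [h1, h2]
  field_simp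
  ring

lemma ratio_bound (A B Z W z p q e : ℝ) (hz : 0 < z) (hZ : z ≤ Z) (hW : z ≤ W)
    (hAB : |A - B| ≤ p) (hZW : |Z - W| ≤ q) (hB : |B| ≤ e) :
    |A / Z - B / W| ≤ p / z + e * q / (z * z) := by
  have hZ0 : 0 < Z := hz.trans_le hZ
  have hW0 : 0 < W := hz.trans_le hW
  have h : A / Z - B / W = (A - B) / Z - B * (Z - W) / (Z * W) := by
    field_simp
    ring
  have hp : 0 ≤ p := (abs_nonneg _).trans hAB
  have hq : 0 ≤ q := (abs_nonneg _).trans hZW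
  have he : 0 ≤ e := (abs_nonneg _).trans hB
  rw [h]
  refine (abs_sub _ _).trans ?_
  rw [abs_div, abs_div, abs_mul, abs_of_pos hZ0, abs_of_pos (mul_pos hZ0 hW0)]
  gcongr

lemma abs_exp_sub (x y m : ℝ) (hx : m ≤ x) (hy : m ≤ y) :
    |Real.exp (-x) - Real.exp (-y)| ≤ Real.exp (-m) * |x - y| := by
  wlog h : x ≤ y generalizing x y
  · rw [abs_sub_comm, abs_sub_comm x y]
    exact this y x hy hx (le_of_not_ge h)
  have h1 : Real.exp (-y) ≤ Real.exp (-x) := Real.exp_le_exp.2 (by linarith)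
  rw [abs_of_nonneg (by linarith), abs_of_nonpos (by linarith)]
  have h2 : Real.exp (-y) = Real.exp (-x) * Real.exp (x - y) := by
    rw [← Real.exp_add]; ring_nf
  have h3 := Real.add_one_le_exp (x - y)
  have h4 : Real.exp (-x) ≤ Real.exp (-m) := Real.exp_le_exp.2 (by linarith)
  calc Real.exp (-x) - Real.exp (-y) = Real.exp (-x) * (1 - Real.exp (x - y)) := by rw [h2]; ring
    _ ≤ Real.exp (-x) * (-(x - y)) := by gcongr; linarith
    _ ≤ _ := by gcongr; linarith

lemma le_exp_sq (ε t : ℝ) (hε : 0 < ε) : t ≤ (1 + 1 / ε) * Real.exp (ε * t ^ 2) := by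
  have h := Real.add_one_le_exp (ε * t ^ 2)
  have h1 : (1 + 1 / ε) * (ε * t ^ 2 + 1) ≤ (1 + 1 / ε) * Real.exp (ε * t ^ 2) := by gcongr
  have h2 : (1 + 1 / ε) * (ε * t ^ 2 + 1) = t ^ 2 + 1 + ε * t ^ 2 + 1 / ε := by
    field_simp; ring
  have h3 : 0 < 1 / ε := by positivity
  have h4 : 0 ≤ ε * t ^ 2 := by positivity
  nlinarith [sq_nonneg (t - 1)]

theorem stmt5 {X : Type*} [NormedAddCommGroup X] [NormedSpace ℝ X] [CompleteSpace X]
    [TopologicalSpace.SeparableSpace X] [MeasurableSpace X] [BorelSpace X]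
    (μ0 : Measure X) [IsProbabilityMeasure μ0]
    (α : ℝ) (hα : 0 < α)
    (hint : Integrable (fun u => Real.exp (α * ‖u‖ ^ 2)) μ0)
    (hball : ∀ (x : X) (r : ℝ), 0 < r → 0 < μ0 (Metric.ball x r))
    (Φ : X → ℝ) (ΦN : ℕ → X → ℝ)
    (hmeas : Measurable Φ) (hmeasN : ∀ N, Measurable (ΦN N))
    -- condition (i'), with constants uniform in N
    (hi : ∀ ε : ℝ, 0 < ε → ∃ M : ℝ, ∀ u : X,
      (M - ε * ‖u‖ ^ 2 ≤ Φ u) ∧ ∀ N : ℕ, M - ε * ‖u‖ ^ 2 ≤ ΦN N u)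
    -- condition (ii'), with constants uniform in N
    (hii : ∀ r : ℝ, 0 < r → ∃ K : ℝ, 0 < K ∧ ∀ u : X, ‖u‖ < r →
      (Φ u ≤ K) ∧ ∀ N : ℕ, ΦN N u ≤ K)
    (Ψ : ℕ → ℝ) (hΨ : Tendsto Ψ atTop (nhds 0))
    -- approximation property
    (happrox : ∀ ε : ℝ, 0 < ε → ∃ K' : ℝ, 0 < K' ∧ ∀ (u : X) (N : ℕ),
      |Φ u - ΦN N u| ≤ K' * Real.exp (ε * ‖u‖ ^ 2) * Ψ N) :
    ∃ C : ℝ, ∀ N : ℕ, ∀ ψ : X → ℝ,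
      Continuous ψ → (∃ B : ℝ, ∀ x, |ψ x| ≤ B) → LipschitzWith 1 ψ →
      |(∫ u, ψ u ∂(posterior μ0 Φ)) - ∫ u, ψ u ∂(posterior μ0 (ΦN N))| ≤ C * Ψ N := by
  set ε := α / 4 with hε
  have hε0 : 0 < ε := by positivity
  obtain ⟨M, hM⟩ := hi ε hε0
  obtain ⟨K, hK0, hK⟩ := hii 1 one_pos
  obtain ⟨K', hK'0, hK'⟩ := happrox ε hε0
  set G : X → ℝ := fun u => Real.exp (α * ‖u‖ ^ 2) with hG
  set I := ∫ u, G u ∂μ0 with hI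
  set c := 1 + 1 / ε with hc
  have hc0 : 0 < c := by positivity
  set E := Real.exp (-M) with hE
  have hE0 : 0 < E := Real.exp_pos _
  set z := Real.exp (-K) * μ0.real (Metric.ball 0 1) with hz
  have hz0 : 0 < z := by
    refine mul_pos (Real.exp_pos _) ?_
    exact ENNReal.toReal_pos (hball 0 1 one_pos).ne' (measure_ne_top _ _)
  have hΨ0 : ∀ N, 0 ≤ Ψ N := fun N => by
    have h := (abs_nonneg _).trans (hK' 0 N)
    exact nonneg_of_mul_nonneg_right h (by positivity)
  -- powers of the basic exponential
  have hexp : ∀ (k : ℝ), k ≤ 4 → ∀ u : X, Real.exp (k * (ε * ‖u‖ ^ 2)) ≤ G u := fun k hk u => by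
    refine Real.exp_le_exp.2 ?_
    have h0 : 0 ≤ ε * ‖u‖ ^ 2 := by positivity
    have h1 : α * ‖u‖ ^ 2 = 4 * (ε * ‖u‖ ^ 2) := by rw [hε]; ring
    rw [h1]
    gcongr
  -- facts for a single potential
  have key : ∀ F : X → ℝ, Measurable F → (∀ u, M - ε * ‖u‖ ^ 2 ≤ F u) →
      (∀ u, ‖u‖ < 1 → F u ≤ K) →
      (∀ u, Real.exp (-F u) ≤ E * Real.exp (ε * ‖u‖ ^ 2)) ∧
      Integrable (fun u => Real.exp (-F u)) μ0 ∧ z ≤ ∫ u, Real.exp (-F u) ∂μ0 := by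
    intro F hF h1 h2
    have hb : ∀ u, Real.exp (-F u) ≤ E * Real.exp (ε * ‖u‖ ^ 2) := fun u => by
      rw [hE, ← Real.exp_add]
      exact Real.exp_le_exp.2 (by linarith [h1 u])
    have hInt : Integrable (fun u => Real.exp (-F u)) μ0 := by
      refine (hint.const_mul E).mono' hF.neg.exp.aestronglyMeasurable ?_
      refine Filter.Eventually.of_forall fun u => ?_
      rw [Real.norm_of_nonneg (Real.exp_pos _).le]
      refine (hb u).trans ?_
      have := hexp 1 (by norm_num) u
      rw [one_mul] at this
      gcongr
    refine ⟨hb, hInt, ?_⟩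
    calc z = ∫ u in Metric.ball (0 : X) 1, Real.exp (-K) ∂μ0 := by
          rw [setIntegral_const, smul_eq_mul, mul_comm]
      _ ≤ ∫ u in Metric.ball (0 : X) 1, Real.exp (-F u) ∂μ0 := by
          refine setIntegral_mono_on (integrable_const _) hInt.integrableOn
            Metric.isOpen_ball.measurableSet ?_
          intro u hu
          exact Real.exp_le_exp.2 (neg_le_neg (h2 u (by simpa using hu)))
      _ ≤ _ := setIntegral_le_integral hInt
          (Filter.Eventually.of_forall fun u => (Real.exp_pos _).le)
  obtain ⟨hb, hIa, hZ⟩ := key Φ hmeas (fun u => (hM u).1) (fun u hu => (hK u hu).1)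
  refine ⟨c * E * K' * I / z + c * E * I * (E * K' * I) / (z * z), fun N ψ hψc hψb hψl => ?_⟩
  obtain ⟨hbN, hIb, hZN⟩ := key (ΦN N) (hmeasN N) (fun u => (hM u).2 N) (fun u hu => (hK u hu).2 N)
  obtain ⟨B, hB⟩ := hψb
  have hψm : AEStronglyMeasurable ψ μ0 := hψc.aestronglyMeasurable
  have hprod : ∀ f : X → ℝ, Integrable f μ0 → Integrable (fun u => ψ u * f u) μ0 := fun f hf =>
    hf.bdd_mul hψm (Filter.Eventually.of_forall fun u => hB u)
  have hprod' : ∀ f : X → ℝ, Integrable f μ0 → Integrable (fun u => (ψ u - ψ 0) * f u) μ0 :=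
    fun f hf => by
      have := (hprod f hf).sub (hf.const_mul (ψ 0))
      refine this.congr (Filter.Eventually.of_forall fun u => ?_)
      simp only [Pi.sub_apply]
      ring
  have hφ : ∀ u, |ψ u - ψ 0| ≤ c * Real.exp (ε * ‖u‖ ^ 2) := fun u => by
    have h := hψl.dist_le_mul u 0
    rw [Real.dist_eq, dist_zero_right, NNReal.coe_one, one_mul] at h
    exact h.trans (le_exp_sq ε ‖u‖ hε0)
  have hab : ∀ u, |Real.exp (-Φ u) - Real.exp (-ΦN N u)| ≤
      E * K' * Ψ N * Real.exp (2 * (ε * ‖u‖ ^ 2)) := fun u => by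
    have h := abs_exp_sub (Φ u) (ΦN N u) _ (hM u).1 ((hM u).2 N)
    have h1 : Real.exp (-(M - ε * ‖u‖ ^ 2)) = E * Real.exp (ε * ‖u‖ ^ 2) := by
      rw [hE, ← Real.exp_add]; ring_nf
    have h2 : Real.exp (2 * (ε * ‖u‖ ^ 2)) = Real.exp (ε * ‖u‖ ^ 2) * Real.exp (ε * ‖u‖ ^ 2) := by
      rw [← Real.exp_add]; ring_nf
    rw [h1] at h
    calc _ ≤ _ := h
      _ ≤ E * Real.exp (ε * ‖u‖ ^ 2) * (K' * Real.exp (ε * ‖u‖ ^ 2) * Ψ N) := by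
          gcongr
          exact hK' u N
      _ = _ := by rw [h2]; ring
  have hle : ∀ (f : X → ℝ) (C : ℝ), (∀ u, |f u| ≤ C * G u) → |∫ u, f u ∂μ0| ≤ C * I := by
    intro f C hf
    rw [hI, ← integral_const_mul]
    have hf2 : ∀ u, ‖f u‖ ≤ C * G u := hf
    exact norm_integral_le_of_norm_le (f := f) (hint.const_mul C)
      (Filter.Eventually.of_forall hf2)
  rw [posterior_integral μ0 Φ hmeas hIa (hz0.trans_le hZ) ψ (hprod _ hIa) (ψ 0),
    posterior_integral μ0 (ΦN N) (hmeasN N) hIb (hz0.trans_le hZN) ψ (hprod _ hIb) (ψ 0),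
    add_sub_add_right_eq_sub]
  have hΨN := hΨ0 N
  refine (ratio_bound _ _ _ _ z (c * E * K' * Ψ N * I) (E * K' * Ψ N * I) (c * E * I) hz0 hZ hZN
    ?_ ?_ ?_).trans (le_of_eq ?_)
  · rw [← integral_sub (hprod' _ hIa) (hprod' _ hIb)]
    refine hle _ _ fun u => ?_
    rw [← mul_sub, abs_mul]
    calc _ ≤ (c * Real.exp (ε * ‖u‖ ^ 2)) * (E * K' * Ψ N * Real.exp (2 * (ε * ‖u‖ ^ 2))) := by
          gcongr
          · exact hφ u
          · exact hab u
      _ = c * E * K' * Ψ N * Real.exp (3 * (ε * ‖u‖ ^ 2)) := by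
          have : Real.exp (3 * (ε * ‖u‖ ^ 2)) =
            Real.exp (ε * ‖u‖ ^ 2) * Real.exp (2 * (ε * ‖u‖ ^ 2)) := by
            rw [← Real.exp_add]; ring_nf
          rw [this]; ring
      _ ≤ _ := by
          gcongr
          exact hexp 3 (by norm_num) u
  · rw [← integral_sub hIa hIb]
    refine hle _ _ fun u => (hab u).trans ?_
    gcongr
    exact hexp 2 (by norm_num) u
  · refine hle _ _ fun u => ?_
    rw [abs_mul, Real.abs_exp]
    calc _ ≤ (c * Real.exp (ε * ‖u‖ ^ 2)) * (E * Real.exp (ε * ‖u‖ ^ 2)) := by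
          gcongr
          · exact hφ u
          · exact hbN u
      _ = c * E * Real.exp (2 * (ε * ‖u‖ ^ 2)) := by
          have : Real.exp (2 * (ε * ‖u‖ ^ 2)) =
            Real.exp (ε * ‖u‖ ^ 2) * Real.exp (ε * ‖u‖ ^ 2) := by
            rw [← Real.exp_add]; ring_nf
          rw [this]; ring
      _ ≤ _ := by
          gcongr
          exact hexp 2 (by norm_num) u
  · ring
end

section
/- Let X be a separable Banach space and let μ0 be a Borel probability measure on X such that there exists α > 0 with ∫_X exp(α‖u‖_X²) dμ0(u) < ∞ and such that μ0 assigns positive mass to every open ball of X. Let Φ : X → ℝ and, for each N ∈ ℕ, Φ^N : X → ℝ be Borel measurable and satisfy, with constants uniform in N: (i') for every ε > 0 there is M = M(ε) ∈ ℝ with Φ(u) ≥ M − ε‖u‖_X² and Φ^N(u) ≥ M − ε‖u‖_X² for all u ∈ X; (ii') for every r > 0 there is K = K(r) > 0 with Φ(u) ≤ K and Φ^N(u) ≤ K whenever ‖u‖_X < r. Assume moreover that for every R > 0 there is K = K(R) > 0 such that |Φ(u) − Φ^N(u)| ≤ K Ψ(N) for all u ∈ X with ‖u‖_X ≤ R and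 all N, where Ψ(N) → 0 as N → ∞. Let μ and μ^N be the probability measures with densities exp(−Φ(u))/Z and exp(−Φ^N(u))/Z^N with respect to μ0, where Z = ∫_X exp(−Φ) dμ0 and Z^N = ∫_X exp(−Φ^N) dμ0. Then W1(μ, μ^N) → 0 as N → ∞, i.e., the supremum over all bounded continuous ψ : X → ℝ with Lipschitz constant at most 1 of |∫_X ψ dμ − ∫_X ψ dμ^N| tends to 0 as N → ∞. -/
open MeasureTheory Filter

theorem posterior_integral_eq {X : Type*} [MeasurableSpace X] (μ0 : Measure X)
    (Φ : X → ℝ) (hmeas : Measurable Φ)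
    (hf : Integrable (fun u => Real.exp (-Φ u)) μ0) (hZ : 0 < ∫ u, Real.exp (-Φ u) ∂μ0)
    (ψ : X → ℝ) :
    ∫ u, ψ u ∂(posterior μ0 Φ)
      = ∫ u, (Real.exp (-Φ u) / ∫ u', Real.exp (-Φ u') ∂μ0) * ψ u ∂μ0 := by
  have h1 : posterior μ0 Φ = μ0.withDensity fun u =>
      ENNReal.ofReal (Real.exp (-Φ u) / ∫ u', Real.exp (-Φ u') ∂μ0) := by
    unfold posterior
    rw [← ofReal_integral_eq_lintegral_ofReal hf (ae_of_all _ fun u => (Real.exp_pos _).le)]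
    congr 1
    funext u
    rw [ENNReal.ofReal_div_of_pos hZ]
  rw [h1, integral_withDensity_eq_integral_toReal_smul (by fun_prop)
    (ae_of_all _ fun u => ENNReal.ofReal_lt_top)]
  refine integral_congr_ae (ae_of_all _ fun u => ?_)
  simp only [smul_eq_mul]
  rw [ENNReal.toReal_ofReal (by positivity)]

theorem stmt7 {X : Type*} [NormedAddCommGroup X] [NormedSpace ℝ X] [CompleteSpace X]
    [TopologicalSpace.SeparableSpace X] [MeasurableSpace X] [BorelSpace X]
    (μ0 : Measure X) [IsProbabilityMeasure μ0]
    (α : ℝ) (hα : 0 < α)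
    (hint : Integrable (fun u => Real.exp (α * ‖u‖ ^ 2)) μ0)
    (hball : ∀ (x : X) (r : ℝ), 0 < r → 0 < μ0 (Metric.ball x r))
    (Φ : X → ℝ) (ΦN : ℕ → X → ℝ)
    (hmeas : Measurable Φ) (hmeasN : ∀ N, Measurable (ΦN N))
    -- condition (i'), with constants uniform in N
    (hi : ∀ ε : ℝ, 0 < ε → ∃ M : ℝ, ∀ u : X,
      (M - ε * ‖u‖ ^ 2 ≤ Φ u) ∧ ∀ N : ℕ, M - ε * ‖u‖ ^ 2 ≤ ΦN N u)
    -- condition (ii'), with constants uniform in N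
    (hii : ∀ r : ℝ, 0 < r → ∃ K : ℝ, 0 < K ∧ ∀ u : X, ‖u‖ < r →
      (Φ u ≤ K) ∧ ∀ N : ℕ, ΦN N u ≤ K)
    (Ψ : ℕ → ℝ) (hΨ : Tendsto Ψ atTop (nhds 0))
    -- approximation property on balls
    (happrox : ∀ R : ℝ, 0 < R → ∃ K : ℝ, 0 < K ∧ ∀ (u : X) (N : ℕ), ‖u‖ ≤ R →
      |Φ u - ΦN N u| ≤ K * Ψ N) :
    Tendsto (fun N : ℕ =>
        sSup {s : ℝ | ∃ ψ : X → ℝ, Continuous ψ ∧ (∃ B : ℝ, ∀ x, |ψ x| ≤ B) ∧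
          LipschitzWith 1 ψ ∧
          s = |(∫ u, ψ u ∂(posterior μ0 Φ)) - ∫ u, ψ u ∂(posterior μ0 (ΦN N))|})
      atTop (nhds 0) := by
  have hMeq : ∃ C : ℝ, 0 < C ∧ ∀ u : X, Real.exp (-Φ u) ≤ C * Real.exp (α / 2 * ‖u‖ ^ 2) ∧
      ∀ N, Real.exp (-ΦN N u) ≤ C * Real.exp (α / 2 * ‖u‖ ^ 2) := by
    obtain ⟨M, hM⟩ := hi (α / 2) (by positivity)
    refine ⟨Real.exp (-M), Real.exp_pos _, fun u => ⟨?_, fun N => ?_⟩⟩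
    · rw [← Real.exp_add]
      exact Real.exp_le_exp.2 (by linarith [(hM u).1])
    · rw [← Real.exp_add]
      exact Real.exp_le_exp.2 (by linarith [(hM u).2 N])
  obtain ⟨C, hC, hb⟩ := hMeq
  have hG : Integrable (fun u : X => C * Real.exp (α / 2 * ‖u‖ ^ 2)) μ0 := by
    refine (hint.mono' (by fun_prop) (ae_of_all _ fun u => ?_)).const_mul C
    rw [Real.norm_of_nonneg (Real.exp_pos _).le]
    refine Real.exp_le_exp.2 ?_
    nlinarith [mul_nonneg hα.le (sq_nonneg ‖u‖)]
  have hG1 : Integrable (fun u : X => ‖u‖ * (C * Real.exp (α / 2 * ‖u‖ ^ 2))) μ0 := by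
    refine (hint.const_mul (C * (1 + 2 / α))).mono' (by fun_prop) (ae_of_all _ fun u => ?_)
    rw [Real.norm_of_nonneg (by positivity)]
    have h1 : ‖u‖ ≤ (1 + 2 / α) * Real.exp (α / 2 * ‖u‖ ^ 2) := by
      have h2 := Real.add_one_le_exp (α / 2 * ‖u‖ ^ 2)
      have h3 : (1 + 2 / α) * (α / 2 * ‖u‖ ^ 2 + 1)
          = ‖u‖ ^ 2 + 1 + α / 2 * ‖u‖ ^ 2 + 2 / α := by
        field_simp
        ring
      have h4 : 0 ≤ α / 2 * ‖u‖ ^ 2 := by positivity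
      have h5 : 0 ≤ 2 / α := by positivity
      have h6 := mul_le_mul_of_nonneg_left h2 (by positivity : 0 ≤ 1 + 2 / α)
      nlinarith [sq_nonneg (‖u‖ - 1)]
    have h7 : Real.exp (α * ‖u‖ ^ 2)
        = Real.exp (α / 2 * ‖u‖ ^ 2) * Real.exp (α / 2 * ‖u‖ ^ 2) := by
      rw [← Real.exp_add]
      congr 1
      ring
    rw [h7]
    calc ‖u‖ * (C * Real.exp (α / 2 * ‖u‖ ^ 2))
        ≤ ((1 + 2 / α) * Real.exp (α / 2 * ‖u‖ ^ 2)) * (C * Real.exp (α / 2 * ‖u‖ ^ 2)) := by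
          gcongr
      _ = _ := by ring
  have hf : Integrable (fun u => Real.exp (-Φ u)) μ0 := by
    refine hG.mono' (by fun_prop) (ae_of_all _ fun u => ?_)
    rw [Real.norm_of_nonneg (Real.exp_pos _).le]
    exact (hb u).1
  have hfN : ∀ N, Integrable (fun u => Real.exp (-ΦN N u)) μ0 := by
    intro N
    have := hmeasN N
    refine hG.mono' (by fun_prop) (ae_of_all _ fun u => ?_)
    rw [Real.norm_of_nonneg (Real.exp_pos _).le]
    exact (hb u).2 N
  have hlim : ∀ u, Tendsto (fun N => Real.exp (-ΦN N u)) atTop (nhds (Real.exp (-Φ u))) := by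
    intro u
    obtain ⟨K, hK, h⟩ := happrox (‖u‖ + 1) (by positivity)
    have h1 : Tendsto (fun N => ΦN N u) atTop (nhds (Φ u)) := by
      rw [tendsto_iff_dist_tendsto_zero]
      refine squeeze_zero (fun _ => dist_nonneg) (fun N => ?_)
        (by simpa using hΨ.const_mul K)
      rw [dist_comm, Real.dist_eq]
      exact h u N (by linarith)
    exact (Real.continuous_exp.tendsto _).comp h1.neg
  set Z := ∫ u, Real.exp (-Φ u) ∂μ0 with hZdef
  set ZN : ℕ → ℝ := fun N => ∫ u, Real.exp (-ΦN N u) ∂μ0 with hZNdef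
  have hZ : 0 < Z := integral_exp_pos hf
  have hZN : ∀ N, 0 < ZN N := fun N => integral_exp_pos (hfN N)
  have hZlim : Tendsto ZN atTop (nhds Z) := by
    refine tendsto_integral_of_dominated_convergence _ (fun N => (hfN N).aestronglyMeasurable) hG
      (fun N => ae_of_all _ fun u => ?_) (ae_of_all _ hlim)
    rw [Real.norm_of_nonneg (Real.exp_pos _).le]
    exact (hb u).2 N
  have hev : ∀ᶠ N in atTop, Z / 2 ≤ ZN N :=
    hZlim.eventually (eventually_ge_nhds (by linarith))
  set a : ℕ → ℝ := fun N =>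
    ∫ u, ‖u‖ * |Real.exp (-Φ u) / Z - Real.exp (-ΦN N u) / ZN N| ∂μ0 with hadef
  have hnf : Integrable (fun u => ‖u‖ * Real.exp (-Φ u)) μ0 := by
    refine hG1.mono' (by fun_prop) (ae_of_all _ fun u => ?_)
    rw [Real.norm_of_nonneg (by positivity)]
    exact mul_le_mul_of_nonneg_left (hb u).1 (norm_nonneg _)
  have hnfN : ∀ N, Integrable (fun u => ‖u‖ * Real.exp (-ΦN N u)) μ0 := by
    intro N
    have := hmeasN N
    refine hG1.mono' (by fun_prop) (ae_of_all _ fun u => ?_)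
    rw [Real.norm_of_nonneg (by positivity)]
    exact mul_le_mul_of_nonneg_left ((hb u).2 N) (norm_nonneg _)
  have haint : ∀ N, Integrable
      (fun u => ‖u‖ * |Real.exp (-Φ u) / Z - Real.exp (-ΦN N u) / ZN N|) μ0 := by
    intro N
    have h := ((hnf.div_const Z).sub ((hnfN N).div_const (ZN N))).norm
    refine h.congr (ae_of_all _ fun u => ?_)
    simp only [Pi.sub_apply, Real.norm_eq_abs]
    rw [mul_div_assoc, mul_div_assoc, ← mul_sub, abs_mul, abs_norm]
  have ha : Tendsto a atTop (nhds 0) := by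
    have h0 : (0 : ℝ) = ∫ _u : X, (0 : ℝ) ∂μ0 := by simp
    rw [h0]
    refine tendsto_integral_filter_of_dominated_convergence
      (fun u => (1 / Z + 2 / Z) * (‖u‖ * (C * Real.exp (α / 2 * ‖u‖ ^ 2))))
      (Eventually.of_forall fun N => (haint N).aestronglyMeasurable) ?_ (hG1.const_mul _)
      (ae_of_all _ fun u => ?_)
    · filter_upwards [hev] with N hN
      refine ae_of_all _ fun u => ?_
      rw [Real.norm_of_nonneg (by positivity)]
      have e1 : Real.exp (-Φ u) / Z ≤ 1 / Z * (C * Real.exp (α / 2 * ‖u‖ ^ 2)) := by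
        rw [div_eq_mul_one_div, mul_comm]
        exact mul_le_mul_of_nonneg_left (hb u).1 (by positivity)
      have e2 : Real.exp (-ΦN N u) / ZN N ≤ 2 / Z * (C * Real.exp (α / 2 * ‖u‖ ^ 2)) := by
        calc Real.exp (-ΦN N u) / ZN N ≤ (C * Real.exp (α / 2 * ‖u‖ ^ 2)) / (Z / 2) :=
              div_le_div₀ (by positivity) ((hb u).2 N) (by positivity) hN
          _ = _ := by field_simp
      have e3 : 0 ≤ Real.exp (-Φ u) / Z := by positivity
      have e4 : 0 ≤ Real.exp (-ΦN N u) / ZN N := div_nonneg (Real.exp_pos _).le (hZN N).le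
      have e5 : |Real.exp (-Φ u) / Z - Real.exp (-ΦN N u) / ZN N|
          ≤ (1 / Z + 2 / Z) * (C * Real.exp (α / 2 * ‖u‖ ^ 2)) := by
        rw [abs_le, add_mul]
        constructor <;> linarith
      calc _ ≤ ‖u‖ * ((1 / Z + 2 / Z) * (C * Real.exp (α / 2 * ‖u‖ ^ 2))) :=
            mul_le_mul_of_nonneg_left e5 (norm_nonneg _)
        _ = _ := by ring
    · have h1 := ((((hlim u).div hZlim hZ.ne').const_sub (Real.exp (-Φ u) / Z)).abs).const_mul ‖u‖
      simpa using h1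
  refine squeeze_zero (fun N => ?_) (fun N => ?_) ha
  · refine Real.sSup_nonneg ?_
    rintro s ⟨ψ, -, -, -, rfl⟩
    exact abs_nonneg _
  · have ha0 : 0 ≤ a N := integral_nonneg fun u => by positivity
    refine Real.sSup_le ?_ ha0
    rintro s ⟨ψ, hc, ⟨B, hB⟩, hL, rfl⟩
    rw [posterior_integral_eq μ0 Φ hmeas hf hZ, posterior_integral_eq μ0 _ (hmeasN N) (hfN N) (hZN N)]
    change |(∫ u, (Real.exp (-Φ u) / Z) * ψ u ∂μ0) -
      ∫ u, (Real.exp (-ΦN N u) / ZN N) * ψ u ∂μ0| ≤ a N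
    have hcm : AEStronglyMeasurable ψ μ0 := hc.aestronglyMeasurable
    have i1 : Integrable (fun u => (Real.exp (-Φ u) / Z) * ψ u) μ0 :=
      (hf.div_const Z).mul_bdd (c := B) hcm (ae_of_all _ hB)
    have i2 : Integrable (fun u => (Real.exp (-ΦN N u) / ZN N) * ψ u) μ0 :=
      ((hfN N).div_const (ZN N)).mul_bdd (c := B) hcm (ae_of_all _ hB)
    have n1 : ∫ u, Real.exp (-Φ u) / Z ∂μ0 = 1 := by
      rw [integral_div]
      exact div_self hZ.ne'
    have n2 : ∫ u, Real.exp (-ΦN N u) / ZN N ∂μ0 = 1 := by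
      rw [integral_div]
      exact div_self (hZN N).ne'
    have key : (∫ u, (Real.exp (-Φ u) / Z) * ψ u ∂μ0) -
        ∫ u, (Real.exp (-ΦN N u) / ZN N) * ψ u ∂μ0
        = ∫ u, (Real.exp (-Φ u) / Z - Real.exp (-ΦN N u) / ZN N) * (ψ u - ψ 0) ∂μ0 := by
      have j1 := (hf.div_const Z).mul_const (ψ 0)
      have j2 := ((hfN N).div_const (ZN N)).mul_const (ψ 0)
      have k : ∀ u, (Real.exp (-Φ u) / Z - Real.exp (-ΦN N u) / ZN N) * (ψ u - ψ 0)
          = ((Real.exp (-Φ u) / Z) * ψ u - (Real.exp (-ΦN N u) / ZN N) * ψ u)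
            - ((Real.exp (-Φ u) / Z) * ψ 0 - (Real.exp (-ΦN N u) / ZN N) * ψ 0) :=
        fun u => by ring
      simp_rw [k]
      rw [integral_sub (by exact i1.sub i2) (by exact j1.sub j2), integral_sub i1 i2, integral_sub j1 j2,
        integral_mul_const, integral_mul_const, n1, n2]
      ring
    rw [key, ← Real.norm_eq_abs]
    refine norm_integral_le_of_norm_le (haint N) (ae_of_all _ fun u => ?_)
    rw [norm_mul, Real.norm_eq_abs, mul_comm]
    refine mul_le_mul_of_nonneg_right ?_ (abs_nonneg _)
    have := hL.norm_sub_le u 0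
    simpa using this
end

section
/- Let X be a separable Banach space and let μ0 be a Borel probability measure on X such that there exists α > 0 with ∫_X exp(α‖u‖_X²) dμ0(u) < ∞. Let Φ : X → ℝ and, for each N ∈ ℕ, Φ^N : X → ℝ be Borel measurable and satisfy, with constants uniform in N: for every ε > 0 there is M = M(ε) ∈ ℝ with Φ(u) ≥ M − ε‖u‖_X² and Φ^N(u) ≥ M − ε‖u‖_X² for all u ∈ X. Assume moreover that for every ε > 0 there is K = K(ε) > 0 such that |Φ(u) − Φ^N(u)| ≤ K exp(ε‖u‖_X²) Ψ(N) for all u ∈ X and all N, where Ψ : ℕ → [0,∞). Then the normalization constants Z = ∫_X exp(−Φ(u)) dμ0(u) and Z^N = ∫_X exp(−Φ^N(u)) dμ0(u) satisfy |Z − Z^N| ≤ C Ψ(N) for a constant C independent of N. -/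
open MeasureTheory

theorem exp_sub_exp_aux (a b c : ℝ) (ha : a ≤ c) (hb : b ≤ c) :
    |Real.exp a - Real.exp b| ≤ Real.exp c * |a - b| := by
  have key : ∀ x y : ℝ, x ≤ c → y ≤ x →
      |Real.exp x - Real.exp y| ≤ Real.exp c * |x - y| := by
    intro x y hx hxy
    rw [abs_of_nonneg (sub_nonneg.2 (Real.exp_le_exp.2 hxy)), abs_of_nonneg (sub_nonneg.2 hxy)]
    have h1 := Real.add_one_le_exp (y - x)
    have h2 : Real.exp y = Real.exp x * Real.exp (y - x) := by
      rw [← Real.exp_add]; congr 1; ring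
    have h3 := Real.exp_le_exp.2 hx
    have h4 := Real.exp_pos x
    calc Real.exp x - Real.exp y = Real.exp x * (1 - Real.exp (y - x)) := by rw [h2]; ring
      _ ≤ Real.exp x * (x - y) := mul_le_mul_of_nonneg_left (by linarith) h4.le
      _ ≤ Real.exp c * (x - y) := mul_le_mul_of_nonneg_right h3 (by linarith)
  rcases le_total b a with h | h
  · exact key a b ha h
  · rw [abs_sub_comm, abs_sub_comm a b]
    exact key b a hb h

theorem stmt12 {X : Type*} [NormedAddCommGroup X] [NormedSpace ℝ X] [CompleteSpace X]
    [TopologicalSpace.SeparableSpace X] [MeasurableSpace X] [BorelSpace X]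
    (μ0 : Measure X) [IsProbabilityMeasure μ0]
    (α : ℝ) (hα : 0 < α)
    (hint : Integrable (fun u => Real.exp (α * ‖u‖ ^ 2)) μ0)
    (Φ : X → ℝ) (ΦN : ℕ → X → ℝ)
    (hmeas : Measurable Φ) (hmeasN : ∀ N, Measurable (ΦN N))
    -- lower bound, with constants uniform in N
    (hi : ∀ ε : ℝ, 0 < ε → ∃ M : ℝ, ∀ u : X,
      (M - ε * ‖u‖ ^ 2 ≤ Φ u) ∧ ∀ N : ℕ, M - ε * ‖u‖ ^ 2 ≤ ΦN N u)
    (Ψ : ℕ → ℝ) (hΨ : ∀ N, 0 ≤ Ψ N)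
    -- approximation property
    (happrox : ∀ ε : ℝ, 0 < ε → ∃ K : ℝ, 0 < K ∧ ∀ (u : X) (N : ℕ),
      |Φ u - ΦN N u| ≤ K * Real.exp (ε * ‖u‖ ^ 2) * Ψ N) :
    ∃ C : ℝ, ∀ N : ℕ,
      |(∫ u, Real.exp (-Φ u) ∂μ0) - ∫ u, Real.exp (-ΦN N u) ∂μ0| ≤ C * Ψ N := by
  obtain ⟨M, hM⟩ := hi (α / 2) (by positivity)
  obtain ⟨K, hK, hKb⟩ := happrox (α / 2) (by positivity)
  have hI : ∀ F : X → ℝ, Measurable F → (∀ u, M - α / 2 * ‖u‖ ^ 2 ≤ F u) →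
      Integrable (fun u => Real.exp (-F u)) μ0 := by
    intro F hF hb
    refine Integrable.mono' (hint.const_mul (Real.exp (-M)))
      (hF.neg.exp.aestronglyMeasurable) (Filter.Eventually.of_forall fun u => ?_)
    rw [Real.norm_eq_abs, Real.abs_exp, ← Real.exp_add]
    apply Real.exp_le_exp.2
    have h1 := hb u
    have h2 : 0 ≤ α * ‖u‖ ^ 2 := by positivity
    linarith
  refine ⟨Real.exp (-M) * K * ∫ u, Real.exp (α * ‖u‖ ^ 2) ∂μ0, fun N => ?_⟩
  rw [← integral_sub (hI Φ hmeas fun u => (hM u).1) (hI (ΦN N) (hmeasN N) fun u => (hM u).2 N)]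
  have hle : ∀ u, ‖Real.exp (-Φ u) - Real.exp (-ΦN N u)‖ ≤
      (Real.exp (-M) * K * Ψ N) * Real.exp (α * ‖u‖ ^ 2) := by
    intro u
    have h1 := exp_sub_exp_aux (-Φ u) (-ΦN N u) (-M + α / 2 * ‖u‖ ^ 2)
      (by linarith [(hM u).1]) (by linarith [(hM u).2 N])
    have h2 : |-Φ u - -ΦN N u| = |Φ u - ΦN N u| := by
      rw [← abs_neg]; congr 1; ring
    rw [h2] at h1
    have h3 : Real.exp (α * ‖u‖ ^ 2) =
        Real.exp (α / 2 * ‖u‖ ^ 2) * Real.exp (α / 2 * ‖u‖ ^ 2) := by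
      rw [← Real.exp_add]; congr 1; ring
    rw [Real.norm_eq_abs]
    refine h1.trans ((mul_le_mul_of_nonneg_left (hKb u N) (Real.exp_pos _).le).trans (le_of_eq ?_))
    rw [h3, Real.exp_add]; ring
  have h := norm_integral_le_of_norm_le (hint.const_mul (Real.exp (-M) * K * Ψ N))
    (Filter.Eventually.of_forall hle)
  rw [integral_const_mul, Real.norm_eq_abs] at h
  refine h.trans (le_of_eq ?_)
  ring
end

section
/- Let X be a separable Banach space and let μ0 be a Borel probability measure on X such that there exists α > 0 with ∫_X exp(α‖u‖_X²) dμ0(u) < ∞. Let Φ : X → ℝ and, for each N ∈ ℕ, Φ^N : X → ℝ be Borel measurable and satisfy, with constants uniform in N: for every ε > 0 there is M = M(ε) ∈ ℝ with Φ(u) ≥ M − ε‖u‖_X² and Φ^N(u) ≥ M − ε‖u‖_X² for all u ∈ X. Assume moreover that for every R > 0 there is K = K(R) > 0 such that |Φ(u) − Φ^N(u)| ≤ K Ψ(N) for all u ∈ X with ‖u‖_X ≤ R and all N, where Ψ(N) → 0 as N → ∞. Then the normalization constants Z^N = ∫_X exp(−Φ^N(u)) dμ0(u) converge to Z = ∫_X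 exp(−Φ(u)) dμ0(u) as N → ∞. -/
open MeasureTheory Filter

theorem stmt13 {X : Type*} [NormedAddCommGroup X] [NormedSpace ℝ X] [CompleteSpace X]
    [TopologicalSpace.SeparableSpace X] [MeasurableSpace X] [BorelSpace X]
    (μ0 : Measure X) [IsProbabilityMeasure μ0]
    (α : ℝ) (hα : 0 < α)
    (hint : Integrable (fun u => Real.exp (α * ‖u‖ ^ 2)) μ0)
    (Φ : X → ℝ) (ΦN : ℕ → X → ℝ)
    (hmeas : Measurable Φ) (hmeasN : ∀ N, Measurable (ΦN N))
    -- lower bound, with constants uniform in N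
    (hi : ∀ ε : ℝ, 0 < ε → ∃ M : ℝ, ∀ u : X,
      (M - ε * ‖u‖ ^ 2 ≤ Φ u) ∧ ∀ N : ℕ, M - ε * ‖u‖ ^ 2 ≤ ΦN N u)
    (Ψ : ℕ → ℝ) (hΨ : Tendsto Ψ atTop (nhds 0))
    -- approximation property on balls
    (happrox : ∀ R : ℝ, 0 < R → ∃ K : ℝ, 0 < K ∧ ∀ (u : X) (N : ℕ), ‖u‖ ≤ R →
      |Φ u - ΦN N u| ≤ K * Ψ N) :
    Tendsto (fun N : ℕ => ∫ u, Real.exp (-ΦN N u) ∂μ0) atTop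
      (nhds (∫ u, Real.exp (-Φ u) ∂μ0)) := by
  obtain ⟨M, hM⟩ := hi α hα
  refine tendsto_integral_of_dominated_convergence
    (fun u => Real.exp (-M) * Real.exp (α * ‖u‖ ^ 2)) ?_ (hint.const_mul _) ?_ ?_
  · intro N
    exact (Real.measurable_exp.comp (hmeasN N).neg).aestronglyMeasurable
  · intro N
    refine Eventually.of_forall fun u => ?_
    rw [Real.norm_eq_abs, Real.abs_exp, ← Real.exp_add]
    have := (hM u).2 N
    exact Real.exp_le_exp.mpr (by linarith)
  · refine Eventually.of_forall fun u => ?_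
    obtain ⟨K, -, hK⟩ := happrox (‖u‖ + 1) (by positivity)
    have h0 : Tendsto (fun N => K * Ψ N) atTop (nhds 0) := by
      simpa using hΨ.const_mul K
    have h1 : Tendsto (fun N => ΦN N u) atTop (nhds (Φ u)) := by
      rw [tendsto_iff_dist_tendsto_zero]
      refine squeeze_zero (fun N => dist_nonneg) (fun N => ?_) h0
      rw [dist_comm, Real.dist_eq]
      exact hK u N (by linarith)
    exact (Real.continuous_exp.tendsto _).comp h1.neg
end

section
/- Let X be a separable Banach space and Y a Banach space, let Φ : X × Y → ℝ satisfy condition (ii), with Φ(·;y) Borel measurable for each y ∈ Y, and let μ0 be a Borel probability measure on X which assigns positive mass to every open ball of X. Then for every r > 0 there is a positive lower bound on the normalization constant, uniform over data of norm less than r: for all y ∈ Y with ‖y‖_Y < r, Z(y) = ∫_X exp(−Φ(u;y)) dμ0(u) ≥ exp(−K(r)) · μ0({u ∈ X : ‖u‖_X < r}) > 0. -/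
open MeasureTheory

theorem stmt17 {X Y : Type*} [NormedAddCommGroup X] [NormedSpace ℝ X] [CompleteSpace X]
    [TopologicalSpace.SeparableSpace X] [MeasurableSpace X] [BorelSpace X]
    [NormedAddCommGroup Y] [NormedSpace ℝ Y] [CompleteSpace Y]
    (Φ : X → Y → ℝ)
    (hmeas : ∀ y : Y, Measurable fun u => Φ u y)
    -- condition (ii), with the bound `K r`
    (K : ℝ → ℝ)
    (hK : ∀ r : ℝ, 0 < r → 0 < K r ∧ ∀ (u : X) (y : Y), ‖u‖ < r → ‖y‖ < r → Φ u y ≤ K r)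
    (μ0 : Measure X) [IsProbabilityMeasure μ0]
    (hball : ∀ (x : X) (r : ℝ), 0 < r → 0 < μ0 (Metric.ball x r)) :
    ∀ r : ℝ, 0 < r → ∀ y : Y, ‖y‖ < r →
      ENNReal.ofReal (Real.exp (-K r)) * μ0 {u : X | ‖u‖ < r} ≤
        (∫⁻ u, ENNReal.ofReal (Real.exp (-Φ u y)) ∂μ0) ∧
      0 < ENNReal.ofReal (Real.exp (-K r)) * μ0 {u : X | ‖u‖ < r} := by
  intro r hr y hy
  have hset : {u : X | ‖u‖ < r} = Metric.ball (0 : X) r := by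
    ext u
    simp
  have hms : MeasurableSet {u : X | ‖u‖ < r} := by
    rw [hset]
    exact Metric.isOpen_ball.measurableSet
  constructor
  · rw [← setLIntegral_const]
    refine le_trans (setLIntegral_mono' hms ?_) (setLIntegral_le_lintegral _ _)
    intro u hu
    apply ENNReal.ofReal_le_ofReal
    apply Real.exp_le_exp.mpr
    exact neg_le_neg ((hK r hr).2 u y hu hy)
  · apply ENNReal.mul_pos
    · exact (ENNReal.ofReal_pos.mpr (Real.exp_pos _)).ne'
    · rw [hset]
      exact (hball 0 r hr).ne'
end
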